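/- Let q be a prime power, d ≥ 2 an integer, and ν, t, m₁, …, m_d positive integers with m₁ ≥ m₂ ≥ ⋯ ≥ m_d ≥ t and 2ν ≥ 2m₁ + m₂ + 1. Suppose ℱᵢ ⊆ 𝒫_{mᵢ} (i = 1, …, d) satisfy dim(F₁ ∩ F₂ ∩ ⋯ ∩ F_d) ≥ t for all choices Fᵢ ∈ ℱᵢ. Then ∏_{i=1}^d |ℱᵢ| ≤ ∏_{i=1}^d N'(t;mᵢ;2ν), and if equality holds then there exists T ∈ 𝒫_t such that ℱᵢ = {F ∈ 𝒫_{mᵢ} : T ⊆ F} for every i ∈ {1, …, d}. -/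

import Mathlib

open Finset Module

noncomputable section

/-- Gaussian binomial coefficient `[n choose k]_q` as a rational number. -/
def gaussBinom (q n k : ℕ) : ℚ :=
  ∏ i ∈ Finset.range k, ((q : ℚ) ^ ((n : ℤ) - i) - 1) / ((q : ℚ) ^ ((k : ℤ) - i) - 1)

/-- `N'(a; m; 2ν)`, the number of `m`-dim totally isotropic subspaces containing
a fixed `a`-dim one. -/
def Nprime (q a m ν : ℕ) : ℚ :=
  ∏ i ∈ Finset.Icc 1 (m - a), ((q : ℚ) ^ (2 * ((ν : ℤ) - m + i)) - 1) / ((q : ℚ) ^ (i : ℤ) - 1)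

variable {K V : Type*} [Field K] [AddCommGroup V] [Module K V]

/-- A subspace is totally isotropic w.r.t. the bilinear form `f`. -/
def TotallyIsotropic (f : V →ₗ[K] V →ₗ[K] K) (W : Submodule K V) : Prop :=
  ∀ x ∈ W, ∀ y ∈ W, f x y = 0

/-- `polar f m` = `𝒫_m`, the set of `m`-dimensional totally isotropic subspaces. -/
def polar (f : V →ₗ[K] V →ₗ[K] K) (m : ℕ) : Set (Submodule K V) :=
  {W | TotallyIsotropic f W ∧ finrank K W = m}

/-- `X` is a `t`-cover of the family `ℱ`. -/
def IsTCover (f : V →ₗ[K] V →ₗ[K] K) (t : ℕ) (ℱ : Set (Submodule K V))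
    (X : Submodule K V) : Prop :=
  TotallyIsotropic f X ∧ ∀ F ∈ ℱ, t ≤ finrank K ↥(X ⊓ F)

/-- `τ_t(ℱ)`, the minimum dimension of a `t`-cover of `ℱ`. -/
def tauCover (f : V →ₗ[K] V →ₗ[K] K) (t : ℕ) (ℱ : Set (Submodule K V)) : ℕ :=
  sInf {x | ∃ X, IsTCover f t ℱ X ∧ finrank K ↥X = x}

def C1 (f : V →ₗ[K] V →ₗ[K] K) (M T : Submodule K V) (m t : ℕ) : Set (Submodule K V) :=
  {F | F ∈ polar f m ∧ T ≤ F ∧ t + 1 ≤ finrank K ↥(F ⊓ M)}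

def C2 (f : V →ₗ[K] V →ₗ[K] K) (M T : Submodule K V) (m : ℕ) : Set (Submodule K V) :=
  {F | F ∈ polar f m ∧ T ≤ F} ∪ {F | F ∈ polar f m ∧ F ≤ M}

def C3 (f : V →ₗ[K] V →ₗ[K] K) (S : Submodule K V) (m : ℕ) : Set (Submodule K V) :=
  {F | F ∈ polar f m ∧ S ≤ F}

def C4 (f : V →ₗ[K] V →ₗ[K] K) (S : Submodule K V) (m t : ℕ) : Set (Submodule K V) :=
  {F | F ∈ polar f m ∧ t ≤ finrank K ↥(F ⊓ S)}

def s0 (q ν m s t : ℕ) : ℚ :=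
  gaussBinom q (s - t) 1 * Nprime q (t + 1) m ν - q * gaussBinom q (s - t) 2 * Nprime q (t + 2) m ν


def famAbove (ℱ : Set (Submodule K V)) (S : Submodule K V) : Set (Submodule K V) :=
  {F | F ∈ ℱ ∧ S ≤ F}

lemma step_aux [Fintype K] [Finite V] (q : ℕ) (hK : Fintype.card K = q)
    (ℱ : Set (Submodule K V)) (S Y : Submodule K V)
    (t k : ℕ) (hk : finrank K ↥(S ⊓ Y) = k)
    (h : ∀ F ∈ ℱ, S ≤ F → t ≤ finrank K ↥(F ⊓ Y)) (M : ℚ)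
    (hM : ∀ v ∈ Y, v ∉ S → ((famAbove ℱ (S ⊔ Submodule.span K {v})).ncard : ℚ) ≤ M) :
    ((famAbove ℱ S).ncard : ℚ) * ((q : ℚ) ^ t - (q : ℚ) ^ k)
      ≤ ((q : ℚ) ^ (finrank K Y) - (q : ℚ) ^ k) * M := by
  classical
  have := Fintype.ofFinite V
  have := Fintype.ofFinite (Submodule K V)
  have hq1 : 1 ≤ q := by rw [← hK]; exact Fintype.card_pos
  have hcard : ∀ W : Submodule K V, (Finset.univ.filter (fun v => v ∈ W)).card = q ^ finrank K W := by
    intro W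
    rw [← hK, ← Module.card_eq_pow_finrank (K := K) (V := W), Fintype.card_subtype]
  have hdiff : ∀ W : Submodule K V, S ⊓ Y ≤ W →
      ((Finset.univ.filter (fun v => v ∈ W ∧ v ∉ S ⊓ Y)).card : ℚ)
        = (q : ℚ) ^ finrank K W - (q : ℚ) ^ k := by
    intro W hW
    have h1 : Finset.univ.filter (fun v => v ∈ W ∧ v ∉ S ⊓ Y)
        = Finset.univ.filter (fun v => v ∈ W) \ Finset.univ.filter (fun v => v ∈ S ⊓ Y) := by
      ext v; simp
    rw [h1, Finset.card_sdiff_of_subset, hcard, hcard, hk, Nat.cast_sub]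
    · push_cast; rfl
    · exact Nat.pow_le_pow_right hq1 (hk ▸ Submodule.finrank_mono hW)
    · intro v hv
      simp only [Finset.mem_filter, Finset.mem_univ, true_and] at hv ⊢
      exact hW hv
  set A : Finset (Submodule K V) := (famAbove ℱ S).toFinset with hA
  set P : Finset V := Finset.univ.filter (fun v => v ∈ Y ∧ v ∉ S ⊓ Y) with hP
  have hAc : (famAbove ℱ S).ncard = A.card := by
    rw [Set.ncard_eq_toFinset_card']
  have hmA : ∀ F, F ∈ A ↔ F ∈ ℱ ∧ S ≤ F := fun F => Set.mem_toFinset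
  have hdc := Finset.sum_card_bipartiteAbove_eq_sum_card_bipartiteBelow (s := A) (t := P)
    (fun (F : Submodule K V) (v : V) => v ∈ F)
  have hdc' : (∑ F ∈ A, ((Finset.bipartiteAbove (fun (F : Submodule K V) (v : V) => v ∈ F) P F).card : ℚ))
      = ∑ v ∈ P, ((Finset.bipartiteBelow (fun (F : Submodule K V) (v : V) => v ∈ F) A v).card : ℚ) := by
    exact_mod_cast hdc
  have hPc : (P.card : ℚ) = (q : ℚ) ^ finrank K Y - (q : ℚ) ^ k := hdiff Y inf_le_right
  rw [hAc, ← hPc, ← nsmul_eq_mul, ← nsmul_eq_mul]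
  refine le_trans (Finset.card_nsmul_le_sum A _ _ ?_) (le_trans hdc'.le (Finset.sum_le_card_nsmul P _ _ ?_))
  · intro F hF
    have hF' : F ∈ ℱ ∧ S ≤ F := (hmA F).1 hF
    have : Finset.bipartiteAbove (fun (F : Submodule K V) (v : V) => v ∈ F) P F
        = Finset.univ.filter (fun v => v ∈ F ⊓ Y ∧ v ∉ S ⊓ Y) := by
      ext v
      simp only [Finset.bipartiteAbove, hP, Finset.mem_filter, Finset.mem_univ, true_and,
        Submodule.mem_inf]
      tauto
    rw [this, hdiff _ (inf_le_inf_right Y hF'.2)]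
    have : (q : ℚ) ^ t ≤ (q : ℚ) ^ finrank K ↥(F ⊓ Y) :=
      pow_le_pow_right₀ (by exact_mod_cast hq1) (h F hF'.1 hF'.2)
    linarith
  · intro v hv
    have hv' : v ∈ Y ∧ v ∉ S := by
      simp only [hP, Finset.mem_filter, Finset.mem_univ, true_and, Submodule.mem_inf] at hv
      tauto
    refine le_trans ?_ (hM v hv'.1 hv'.2)
    rw [← Set.ncard_coe_finset]
    have : (↑(Finset.bipartiteBelow (fun (F : Submodule K V) (v : V) => v ∈ F) A v) : Set (Submodule K V))
        = famAbove ℱ (S ⊔ Submodule.span K {v}) := by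
      ext F
      simp [Finset.bipartiteBelow, hmA, famAbove, and_assoc]
    rw [this]

lemma Nprime_self (q m ν : ℕ) : Nprime q m m ν = 1 := by simp [Nprime]

lemma Nprime_pos (q a m ν : ℕ) (hq : 2 ≤ q) (hm : m ≤ ν) : 0 < Nprime q a m ν := by
  have hq' : (1 : ℚ) < q := by exact_mod_cast hq
  apply Finset.prod_pos
  intro i hi
  have hi := Finset.mem_Icc.mp hi
  apply div_pos
  · rw [sub_pos]; exact one_lt_zpow₀ hq' (by omega)
  · rw [sub_pos]; exact one_lt_zpow₀ hq' (by omega)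

lemma Nprime_rec (q s m ν : ℕ) (hq : 2 ≤ q) (hs : s < m) (hm : m ≤ ν) :
    ((q : ℚ) ^ m - (q : ℚ) ^ s) * Nprime q s m ν
      = ((q : ℚ) ^ (2 * ν - s) - (q : ℚ) ^ s) * Nprime q (s + 1) m ν := by
  have hq' : (1 : ℚ) < q := by exact_mod_cast hq
  have h0 : (q : ℚ) ≠ 0 := by positivity
  have e : m - s = (m - (s + 1)) + 1 := by omega
  have h1 : Nprime q s m ν = Nprime q (s + 1) m ν *
      (((q : ℚ) ^ (2 * (ν - s)) - 1) / ((q : ℚ) ^ (m - s) - 1)) := by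
    unfold Nprime
    rw [e, Finset.prod_Icc_succ_top (by omega), ← e]
    congr 1
    rw [← zpow_natCast (q : ℚ) (2 * (ν - s)), ← zpow_natCast (q : ℚ) (m - s)]
    congr 3
    push_cast [Nat.cast_sub (show s ≤ ν by omega), Nat.cast_sub hs.le]
    ring
  have h2 : (q : ℚ) ^ m = (q : ℚ) ^ s * (q : ℚ) ^ (m - s) := by
    rw [← pow_add]; congr 1; omega
  have h3 : (q : ℚ) ^ (2 * ν - s) = (q : ℚ) ^ s * (q : ℚ) ^ (2 * (ν - s)) := by
    rw [← pow_add]; congr 1; omega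
  have h4 : (q : ℚ) ^ (m - s) - 1 ≠ 0 := by
    have : (1 : ℚ) < (q : ℚ) ^ (m - s) := one_lt_pow₀ hq' (by omega)
    linarith
  rw [h1, h2, h3]
  field_simp

lemma Nprime_key (q s m n ν : ℕ) (hq : 2 ≤ q) (hs : s < m) (hm : n + 2 + m + s ≤ 2 * ν) (hmν : m ≤ ν) :
    4 * (q : ℚ) ^ n * Nprime q (s + 1) m ν < Nprime q s m ν := by
  have hq' : (1 : ℚ) < q := by exact_mod_cast hq
  have hq2 : (2 : ℚ) ≤ q := by exact_mod_cast hq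
  have hr := Nprime_rec q s m ν hq hs hmν
  have hp := Nprime_pos q (s + 1) m ν hq hmν
  have h4 : 0 < (q : ℚ) ^ m - (q : ℚ) ^ s := sub_pos.2 (pow_lt_pow_right₀ hq' hs)
  have h5 : (q : ℚ) ^ (n + 2 + m) ≤ (q : ℚ) ^ (2 * ν - s) :=
    pow_le_pow_right₀ hq'.le (by omega)
  have h6 : 4 * (q : ℚ) ^ n * (q : ℚ) ^ m ≤ (q : ℚ) ^ (n + 2 + m) := by
    rw [pow_add, pow_add]
    have : (4 : ℚ) ≤ (q : ℚ) ^ 2 := by nlinarith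
    have h0 : 0 ≤ (q : ℚ) ^ n * (q : ℚ) ^ m := by positivity
    nlinarith
  have h7 : (1 : ℚ) ≤ (q : ℚ) ^ n := one_le_pow₀ hq'.le
  have h8 : (0 : ℚ) < (q : ℚ) ^ s := by positivity
  have h9 : ((q : ℚ) ^ m - (q : ℚ) ^ s) * (4 * (q : ℚ) ^ n) < (q : ℚ) ^ (2 * ν - s) - (q : ℚ) ^ s := by
    nlinarith
  have h10 := mul_lt_mul_of_pos_right h9 hp
  rw [← hr] at h10
  have : ((q : ℚ) ^ m - (q : ℚ) ^ s) * (4 * (q : ℚ) ^ n * Nprime q (s + 1) m ν) < ((q : ℚ) ^ m - (q : ℚ) ^ s) * Nprime q s m ν := by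
    linarith
  exact lt_of_mul_lt_mul_left this h4.le

lemma Nprime_iter (q t m n ν : ℕ) (hq : 2 ≤ q) (hm : n + m + m + 1 ≤ 2 * ν) (hmν : m ≤ ν) (b : ℕ)
    (hb : t + b ≤ m) :
    (4 * (q : ℚ) ^ n) ^ b * Nprime q (t + b) m ν ≤ Nprime q t m ν ∧
    (0 < b → (4 * (q : ℚ) ^ n) ^ b * Nprime q (t + b) m ν < Nprime q t m ν) := by
  induction b with
  | zero => simp
  | succ b ih =>
    have ih := (ih (by omega)).1
    have hk := Nprime_key q (t + b) m n ν hq (by omega) (by omega) hmν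
    have hq0 : (0 : ℚ) < q := by exact_mod_cast (by omega : 0 < q)
    have : (4 * (q : ℚ) ^ n) ^ (b + 1) * Nprime q (t + (b + 1)) m ν < Nprime q t m ν := by
      refine lt_of_lt_of_le ?_ ih
      rw [pow_succ, mul_assoc]
      exact mul_lt_mul_of_pos_left hk (by positivity)
    exact ⟨this.le, fun _ => this⟩

/-- product form of the Gaussian binomial `[a+t, t]` -/
def gProd (q a t : ℕ) : ℚ :=
  ∏ j ∈ Finset.range t, ((q : ℚ) ^ (a + j + 1) - 1) / ((q : ℚ) ^ (j + 1) - 1)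

lemma gProd_rec (q a t : ℕ) (hq : 2 ≤ q) :
    gProd q (a + 1) t * ((q : ℚ) ^ (a + 1) - 1) = gProd q a t * ((q : ℚ) ^ (a + 1 + t) - 1) := by
  have hq' : (1 : ℚ) < q := by exact_mod_cast hq
  induction t with
  | zero => simp [gProd]
  | succ t ih =>
    have e1 : ∀ a, gProd q a (t + 1) = gProd q a t *
      (((q : ℚ) ^ (a + t + 1) - 1) / ((q : ℚ) ^ (t + 1) - 1)) := fun a => Finset.prod_range_succ _ _
    rw [e1, e1]
    have e2 : a + 1 + t + 1 = a + 1 + (t + 1) := by ring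
    have e3 : a + t + 1 = a + 1 + t := by ring
    rw [e2, e3]
    calc _ = (gProd q (a + 1) t * ((q : ℚ) ^ (a + 1) - 1)) * (((q : ℚ) ^ (a + 1 + (t + 1)) - 1) / ((q : ℚ) ^ (t + 1) - 1)) := by ring
      _ = _ := by rw [ih]; ring

lemma gProd_nonneg (q a t : ℕ) (hq : 2 ≤ q) : 0 ≤ gProd q a t := by
  have hq' : (1 : ℚ) ≤ q := by exact_mod_cast (by omega : 1 ≤ q)
  apply Finset.prod_nonneg
  intro i _
  exact div_nonneg (sub_nonneg.2 (one_le_pow₀ hq')) (sub_nonneg.2 (one_le_pow₀ hq'))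

lemma gProd_le (q a t : ℕ) (hq : 2 ≤ q) : gProd q a t ≤ (2 * (q : ℚ) ^ t) ^ a := by
  have hq' : (1 : ℚ) < q := by exact_mod_cast hq
  have hq2 : (2 : ℚ) ≤ q := by exact_mod_cast hq
  induction a with
  | zero =>
    simp only [pow_zero]
    apply le_of_eq
    apply Finset.prod_eq_one
    intro j _
    rw [zero_add]
    apply div_self
    have : (1 : ℚ) < (q : ℚ) ^ (j + 1) := one_lt_pow₀ hq' (by omega)
    linarith
  | succ a ih =>
    have hr := gProd_rec q a t hq
    have h1 : (2 : ℚ) ≤ (q : ℚ) ^ (a + 1) := by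
      rw [pow_succ]
      have : (1 : ℚ) ≤ (q : ℚ) ^ a := one_le_pow₀ hq'.le
      nlinarith
    have h2 : (q : ℚ) ^ (a + 1 + t) - 1 ≤ (2 * (q : ℚ) ^ t) * ((q : ℚ) ^ (a + 1) - 1) := by
      rw [pow_add]
      have : (1 : ℚ) ≤ (q : ℚ) ^ t := one_le_pow₀ hq'.le
      nlinarith
    have h0 := gProd_nonneg q a t hq
    have h3 : gProd q (a + 1) t * ((q : ℚ) ^ (a + 1) - 1) ≤ (2 * (q : ℚ) ^ t) ^ (a + 1) * ((q : ℚ) ^ (a + 1) - 1) := by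
      rw [hr, pow_succ, mul_assoc]
      refine mul_le_mul ih h2 ?_ (by positivity)
      exact sub_nonneg.2 (one_le_pow₀ hq'.le)
    exact le_of_mul_le_mul_right h3 (by linarith)

lemma polar_count [Fintype K] [Finite V] (q ν : ℕ) (hq : 2 ≤ q) (hK : Fintype.card K = q)
    (f : V →ₗ[K] V →ₗ[K] K) (halt : ∀ x, f x x = 0) (hnd : ∀ x, (∀ y, f x y = 0) → x = 0)
    (hV : finrank K V = 2 * ν) (m : ℕ) (hm : m ≤ ν) (j : ℕ) :
    ∀ (s : ℕ) (S : Submodule K V), s + j = m → finrank K S = s →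
      ((famAbove (polar f m) S).ncard : ℚ) ≤ Nprime q s m ν := by
  have hq' : (1 : ℚ) < q := by exact_mod_cast hq
  induction j with
  | zero =>
    intro s S hs hS
    have : s = m := by omega
    subst this
    rw [Nprime_self]
    have : famAbove (polar f s) S ⊆ {S} := by
      rintro F ⟨⟨_, h1⟩, h2⟩
      exact (Submodule.eq_of_le_of_finrank_eq h2 (by rw [hS, h1])).symm
    have := Set.ncard_le_ncard this (Set.toFinite _)
    rw [Set.ncard_singleton] at this
    exact_mod_cast this
  | succ j ih =>
    intro s S hs hS
    by_cases hiso : TotallyIsotropic f S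
    swap
    · have : famAbove (polar f m) S = ∅ := by
        rw [Set.eq_empty_iff_forall_notMem]
        rintro F ⟨⟨h1, _⟩, h2⟩
        exact hiso (fun x hx y hy => h1 x (h2 hx) y (h2 hy))
      rw [this]
      simpa using (Nprime_pos q s m ν hq hm).le
    have halt' : LinearMap.BilinForm.IsAlt f := halt
    have hsymm : ∀ x y, f x y = 0 → f y x = 0 := halt'.isRefl
    have hN : LinearMap.BilinForm.Nondegenerate f :=
      ⟨fun x hx => hnd x hx, fun y hy => hnd y (fun x => hsymm _ _ (hy x))⟩
    have hperp := LinearMap.BilinForm.finrank_orthogonal hN S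
    have hmem : ∀ x, x ∈ LinearMap.BilinForm.orthogonal f S ↔ ∀ y ∈ S, f y x = 0 :=
      fun x => Iff.rfl
    have hle : S ≤ LinearMap.BilinForm.orthogonal f S := fun x hx =>
      (hmem x).2 (fun y hy => hiso y hy x hx)
    have hstep := step_aux q hK (polar f m) S (LinearMap.BilinForm.orthogonal f S) m s
      (by rw [inf_eq_left.2 hle, hS])
      (by
        rintro F ⟨h1, h2⟩ h3
        have : F ≤ LinearMap.BilinForm.orthogonal f S := fun x hx =>
          (hmem x).2 (fun y hy => h1 y (h3 hy) x hx)
        rw [inf_eq_left.2 this, h2])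
      (Nprime q (s + 1) m ν)
      (by
        intro v _ hv
        exact ih (s + 1) _ (by omega) (by rw [Submodule.finrank_sup_span_singleton hv, hS]))
    rw [hperp, hV, hS, ← Nprime_rec q s m ν hq (by omega) hm, mul_comm] at hstep
    exact le_of_mul_le_mul_left hstep (sub_pos.2 (pow_lt_pow_right₀ hq' (by omega)))

lemma famAbove_count [Fintype K] [Finite V] (q ν : ℕ) (hq : 2 ≤ q) (hK : Fintype.card K = q)
    (f : V →ₗ[K] V →ₗ[K] K) (halt : ∀ x, f x x = 0) (hnd : ∀ x, (∀ y, f x y = 0) → x = 0)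
    (hV : finrank K V = 2 * ν) (m : ℕ) (hm : m ≤ ν) (ℱ : Set (Submodule K V)) (hℱ : ℱ ⊆ polar f m)
    (S : Submodule K V) (hs : finrank K S ≤ m) :
    ((famAbove ℱ S).ncard : ℚ) ≤ Nprime q (finrank K S) m ν := by
  refine le_trans ?_ (polar_count q ν hq hK f halt hnd hV m hm (m - finrank K S) _ S (by omega) rfl)
  have hsub : famAbove ℱ S ⊆ famAbove (polar f m) S := fun F hF => ⟨hℱ hF.1, hF.2⟩
  exact_mod_cast Set.ncard_le_ncard hsub (Set.toFinite _)

lemma pow_aux (q n t k : ℕ) (hq : 2 ≤ q) (htn : t ≤ n) (hk : k < t) :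
    (q : ℚ) ^ n - (q : ℚ) ^ k ≤ 2 * (q : ℚ) ^ (n - t) * ((q : ℚ) ^ t - (q : ℚ) ^ k) := by
  have hq' : (1 : ℚ) < q := by exact_mod_cast hq
  have hq2 : (2 : ℚ) ≤ q := by exact_mod_cast hq
  have h1 : (q : ℚ) ^ n = (q : ℚ) ^ (n - t) * (q : ℚ) ^ t := by
    rw [← pow_add]; congr 1; omega
  have h2 : 2 * (q : ℚ) ^ k ≤ (q : ℚ) ^ t := by
    have h3 : (q : ℚ) ^ (k + 1) ≤ (q : ℚ) ^ t := pow_le_pow_right₀ hq'.le hk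
    rw [pow_succ] at h3
    have : 0 < (q : ℚ) ^ k := by positivity
    nlinarith
  have h4 : 0 < (q : ℚ) ^ k := by positivity
  have h5 : 0 < (q : ℚ) ^ (n - t) := by positivity
  rw [h1]
  nlinarith

lemma step_cover [Fintype K] [Finite V] (q : ℕ) (hq : 2 ≤ q) (hK : Fintype.card K = q)
    (f : V →ₗ[K] V →ₗ[K] K) (m n t : ℕ) (htn : t ≤ n)
    (ℱ 𝒢 : Set (Submodule K V)) (hℱ : ℱ ⊆ polar f m) (h𝒢 : 𝒢 ⊆ polar f n)
    (hcross : ∀ F ∈ ℱ, ∀ G ∈ 𝒢, t ≤ finrank K ↥(F ⊓ G))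
    (S : Submodule K V) (hS : ¬ IsTCover f t 𝒢 S) (M : ℚ) (hM0 : 0 ≤ M)
    (hM : ∀ v, v ∉ S → ((famAbove ℱ (S ⊔ Submodule.span K {v})).ncard : ℚ) ≤ M) :
    ((famAbove ℱ S).ncard : ℚ) ≤ 2 * (q : ℚ) ^ (n - t) * M := by
  have hq' : (1 : ℚ) < q := by exact_mod_cast hq
  by_cases hiso : TotallyIsotropic f S
  swap
  · have : famAbove ℱ S = ∅ := by
      rw [Set.eq_empty_iff_forall_notMem]
      rintro F ⟨h1, h2⟩
      exact hiso (fun x hx y hy => (hℱ h1).1 x (h2 hx) y (h2 hy))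
    rw [this]
    simp only [Set.ncard_empty, Nat.cast_zero]
    positivity
  have : ∃ G ∈ 𝒢, finrank K ↥(S ⊓ G) < t := by
    by_contra hcon
    push Not at hcon
    exact hS ⟨hiso, hcon⟩
  obtain ⟨G, hG, hlt⟩ := this
  have hst := step_aux q hK ℱ S G t _ rfl (fun F hF _ => hcross F hF G hG) M
    (fun v _ hv => hM v hv)
  rw [(h𝒢 hG).2] at hst
  have h1 := pow_aux q n t _ hq htn hlt
  have h2 : 0 < (q : ℚ) ^ t - (q : ℚ) ^ (finrank K ↥(S ⊓ G)) :=
    sub_pos.2 (pow_lt_pow_right₀ hq' hlt)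
  have h3 := mul_le_mul_of_nonneg_right h1 hM0
  refine le_of_mul_le_mul_right ?_ h2
  linarith

lemma bound1 [Fintype K] [Finite V] (q ν : ℕ) (hq : 2 ≤ q) (hK : Fintype.card K = q)
    (f : V →ₗ[K] V →ₗ[K] K) (halt : ∀ x, f x x = 0) (hnd : ∀ x, (∀ y, f x y = 0) → x = 0)
    (hV : finrank K V = 2 * ν) (m n t : ℕ) (hm : m ≤ ν) (htn : t ≤ n)
    (ℱ 𝒢 : Set (Submodule K V)) (hℱ : ℱ ⊆ polar f m) (h𝒢 : 𝒢 ⊆ polar f n)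
    (hcross : ∀ F ∈ ℱ, ∀ G ∈ 𝒢, t ≤ finrank K ↥(F ⊓ G))
    (τ : ℕ) (hτm : τ ≤ m) (hτ : ∀ Y, IsTCover f t 𝒢 Y → τ ≤ finrank K Y) (j : ℕ) :
    ∀ S : Submodule K V, finrank K S + j = τ →
      ((famAbove ℱ S).ncard : ℚ) ≤ (2 * (q : ℚ) ^ (n - t)) ^ j * Nprime q τ m ν := by
  induction j with
  | zero =>
    intro S hS
    have := famAbove_count q ν hq hK f halt hnd hV m hm ℱ hℱ S (by omega)
    rw [← hS]
    simpa using this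
  | succ j ih =>
    intro S hS
    have hnp := Nprime_pos q τ m ν hq hm
    have := step_cover q hq hK f m n t htn ℱ 𝒢 hℱ h𝒢 hcross S
      (fun h => by have := hτ S h; omega)
      ((2 * (q : ℚ) ^ (n - t)) ^ j * Nprime q τ m ν) (by positivity)
      (fun v hv => ih _ (by rw [Submodule.finrank_sup_span_singleton hv]; omega))
    rw [pow_succ]
    linarith

lemma bound2 [Fintype K] [Finite V] (q : ℕ) (hq : 2 ≤ q) (hK : Fintype.card K = q)
    (t a : ℕ) (ℱ : Set (Submodule K V)) (X : Submodule K V) (hX : finrank K X = t + a)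
    (hXF : ∀ F ∈ ℱ, t ≤ finrank K ↥(X ⊓ F)) (M : ℚ)
    (hM : ∀ T : Submodule K V, finrank K T = t → ((famAbove ℱ T).ncard : ℚ) ≤ M) (j : ℕ) :
    ∀ S : Submodule K V, S ≤ X → finrank K S + j = t →
      ((famAbove ℱ S).ncard : ℚ) ≤ gProd q a j * M := by
  have hq' : (1 : ℚ) < q := by exact_mod_cast hq
  induction j with
  | zero =>
    intro S _ hS
    simpa [gProd] using hM S hS
  | succ j ih =>
    intro S hSX hS
    have hst := step_aux q hK ℱ S X t (finrank K S) (by rw [inf_eq_left.2 hSX])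
      (fun F hF _ => by rw [inf_comm]; exact hXF F hF) (gProd q a j * M)
      (fun v hv hvS => ih _ (sup_le hSX (by simpa using hv))
        (by rw [Submodule.finrank_sup_span_singleton hvS]; omega))
    have e : gProd q a (j + 1) = gProd q a j *
      (((q : ℚ) ^ (a + j + 1) - 1) / ((q : ℚ) ^ (j + 1) - 1)) := Finset.prod_range_succ _ _
    have h1 : (1 : ℚ) < (q : ℚ) ^ (j + 1) := one_lt_pow₀ hq' (by omega)
    have h2 : (q : ℚ) ^ t = (q : ℚ) ^ finrank K S * (q : ℚ) ^ (j + 1) := by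
      rw [← pow_add]; congr 1; omega
    have h3 : (q : ℚ) ^ (t + a) = (q : ℚ) ^ finrank K S * (q : ℚ) ^ (a + j + 1) := by
      rw [← pow_add]; congr 1; omega
    have h4 : 0 < (q : ℚ) ^ finrank K S := by positivity
    have h5 : 0 < (q : ℚ) ^ (j + 1) - 1 := by linarith
    rw [hX, h2, h3] at hst
    rw [e]
    have h6 : ((famAbove ℱ S).ncard : ℚ) * ((q : ℚ) ^ (j + 1) - 1)
        ≤ ((q : ℚ) ^ (a + j + 1) - 1) * (gProd q a j * M) := by
      refine le_of_mul_le_mul_left ?_ h4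
      linarith
    have h7 : gProd q a j * (((q : ℚ) ^ (a + j + 1) - 1) / ((q : ℚ) ^ (j + 1) - 1)) * M
        = (((q : ℚ) ^ (a + j + 1) - 1) * (gProd q a j * M)) / ((q : ℚ) ^ (j + 1) - 1) := by
      ring
    rw [h7, le_div_iff₀ h5]
    exact h6

lemma bound_all [Fintype K] [Finite V] (q ν : ℕ) (hq : 2 ≤ q) (hK : Fintype.card K = q)
    (f : V →ₗ[K] V →ₗ[K] K) (halt : ∀ x, f x x = 0) (hnd : ∀ x, (∀ y, f x y = 0) → x = 0)
    (hV : finrank K V = 2 * ν) (m n t : ℕ) (hm : m ≤ ν) (htn : t ≤ n)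
    (ℱ 𝒢 : Set (Submodule K V)) (hℱ : ℱ ⊆ polar f m) (h𝒢 : 𝒢 ⊆ polar f n)
    (hcross : ∀ F ∈ ℱ, ∀ G ∈ 𝒢, t ≤ finrank K ↥(F ⊓ G))
    (a b : ℕ) (hτm : t + b ≤ m) (hτ : ∀ Y, IsTCover f t 𝒢 Y → t + b ≤ finrank K Y)
    (X : Submodule K V) (hX : finrank K X = t + a) (hXF : IsTCover f t ℱ X) :
    (ℱ.ncard : ℚ) ≤ (2 * (q : ℚ) ^ t) ^ a * ((2 * (q : ℚ) ^ (n - t)) ^ b * Nprime q (t + b) m ν) := by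
  have h1 := bound1 q ν hq hK f halt hnd hV m n t hm htn ℱ 𝒢 hℱ h𝒢 hcross (t + b) hτm hτ b
  have h2 := bound2 q hq hK t a ℱ X hX hXF.2 _ (fun T hT => h1 T (by omega)) t ⊥ bot_le (by simp)
  have h3 : famAbove ℱ ⊥ = ℱ := by ext; simp [famAbove]
  rw [h3] at h2
  refine le_trans h2 (mul_le_mul_of_nonneg_right (gProd_le q a t hq) ?_)
  have := Nprime_pos q (t + b) m ν hq hm
  positivity

lemma exists_min_cover [Fintype K] [Finite V] (f : V →ₗ[K] V →ₗ[K] K) (t n : ℕ)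
    (ℱ 𝒢 : Set (Submodule K V)) (h𝒢 : 𝒢 ⊆ polar f n) (hne : ℱ.Nonempty) (hne' : 𝒢.Nonempty)
    (hcross : ∀ F ∈ ℱ, ∀ G ∈ 𝒢, t ≤ finrank K ↥(F ⊓ G)) :
    ∃ a X, IsTCover f t ℱ X ∧ finrank K X = t + a ∧ t + a ≤ n ∧
      ∀ Y, IsTCover f t ℱ Y → t + a ≤ finrank K Y := by
  classical
  obtain ⟨G, hG⟩ := hne'
  obtain ⟨F, hF⟩ := hne
  have hGc : IsTCover f t ℱ G := ⟨(h𝒢 hG).1, fun F hF => by rw [inf_comm]; exact hcross F hF G hG⟩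
  have hex : ∃ x, ∃ X, IsTCover f t ℱ X ∧ finrank K ↥X = x := ⟨_, G, hGc, rfl⟩
  obtain ⟨X, hX, hXd⟩ := Nat.find_spec hex
  have hge : t ≤ Nat.find hex := by
    rw [← hXd]
    exact (hX.2 F hF).trans (Submodule.finrank_mono inf_le_left)
  refine ⟨Nat.find hex - t, X, hX, by omega, ?_, ?_⟩
  · have := Nat.find_min' hex ⟨G, hGc, rfl⟩
    rw [(h𝒢 hG).2] at this
    omega
  · intro Y hY
    have := Nat.find_min' hex ⟨Y, hY, rfl⟩
    omega

lemma pair_thm [Fintype K] [Finite V] (q ν : ℕ) (hq : 2 ≤ q) (hK : Fintype.card K = q)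
    (f : V →ₗ[K] V →ₗ[K] K) (halt : ∀ x, f x x = 0) (hnd : ∀ x, (∀ y, f x y = 0) → x = 0)
    (hV : finrank K V = 2 * ν) (m n t : ℕ) (htm : t ≤ m) (htn : t ≤ n)
    (hd1 : n + m + m + 1 ≤ 2 * ν) (hd2 : m + n + n + 1 ≤ 2 * ν)
    (ℱ 𝒢 : Set (Submodule K V)) (hℱ : ℱ ⊆ polar f m) (h𝒢 : 𝒢 ⊆ polar f n)
    (hne : ℱ.Nonempty) (hne' : 𝒢.Nonempty)
    (hcross : ∀ F ∈ ℱ, ∀ G ∈ 𝒢, t ≤ finrank K ↥(F ⊓ G)) :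
    (ℱ.ncard : ℚ) * 𝒢.ncard ≤ Nprime q t m ν * Nprime q t n ν ∧
    ((ℱ.ncard : ℚ) * 𝒢.ncard = Nprime q t m ν * Nprime q t n ν →
      (ℱ.ncard : ℚ) = Nprime q t m ν ∧ ∃ T ∈ polar f t, ℱ = famAbove (polar f m) T ∧
        𝒢 = famAbove (polar f n) T) := by
  have hq' : (1 : ℚ) < q := by exact_mod_cast hq
  have hmν : m ≤ ν := by omega
  have hnν : n ≤ ν := by omega
  have hcross' : ∀ G ∈ 𝒢, ∀ F ∈ ℱ, t ≤ finrank K ↥(G ⊓ F) := fun G hG F hF => by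
    rw [inf_comm]; exact hcross F hF G hG
  obtain ⟨a, X, hX, hXd, han, hXmin⟩ := exists_min_cover f t n ℱ 𝒢 h𝒢 hne hne' hcross
  obtain ⟨b, Y, hY, hYd, hbm, hYmin⟩ := exists_min_cover f t m 𝒢 ℱ hℱ hne' hne hcross'
  have h1 := bound_all q ν hq hK f halt hnd hV m n t hmν htn ℱ 𝒢 hℱ h𝒢 hcross a b hbm hYmin X hXd hX
  have h2 := bound_all q ν hq hK f halt hnd hV n m t hnν htm 𝒢 ℱ h𝒢 hℱ hcross' b a han hXmin Y hYd hY
  have hp1 := Nprime_pos q (t + b) m ν hq hmν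
  have hp2 := Nprime_pos q (t + a) n ν hq hnν
  have hp3 := Nprime_pos q t m ν hq hmν
  have hp4 := Nprime_pos q t n ν hq hnν
  obtain ⟨i1, i1'⟩ := Nprime_iter q t m n ν hq hd1 hmν b hbm
  obtain ⟨i2, i2'⟩ := Nprime_iter q t n m ν hq hd2 hnν a han
  have e1 : (q : ℚ) ^ n = (q : ℚ) ^ t * (q : ℚ) ^ (n - t) := by
    rw [← pow_add]; congr 1; omega
  have e2 : (q : ℚ) ^ m = (q : ℚ) ^ t * (q : ℚ) ^ (m - t) := by
    rw [← pow_add]; congr 1; omega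
  have hprod : (ℱ.ncard : ℚ) * 𝒢.ncard ≤ ((4 * (q : ℚ) ^ n) ^ b * Nprime q (t + b) m ν) *
      ((4 * (q : ℚ) ^ m) ^ a * Nprime q (t + a) n ν) := by
    refine le_trans (mul_le_mul h1 h2 (by positivity) (by positivity)) (le_of_eq ?_)
    rw [e1, e2, show (4 : ℚ) = 2 * 2 by norm_num]
    simp only [mul_pow]
    ring
  refine ⟨hprod.trans (mul_le_mul i1 i2 (by positivity) hp3.le), ?_⟩
  intro heq
  have hb : b = 0 := by
    by_contra hb
    have := mul_lt_mul (i1' (by omega)) i2 (by positivity) hp3.le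
    linarith
  have ha : a = 0 := by
    by_contra ha
    have := mul_lt_mul' i1 (i2' (by omega)) (by positivity) hp3
    linarith
  subst ha hb
  simp only [pow_zero, one_mul, add_zero] at h1 h2 hXd
  have hFc : (ℱ.ncard : ℚ) = Nprime q t m ν := by
    refine le_antisymm h1 ?_
    by_contra hlt
    push Not at hlt
    have := mul_lt_mul hlt h2 (by have := (Set.ncard_pos (Set.toFinite 𝒢)).2 hne'; exact_mod_cast this) hp3.le
    linarith
  have hGc : (𝒢.ncard : ℚ) = Nprime q t n ν := by
    rw [hFc] at heq
    exact mul_left_cancel₀ hp3.ne' heq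
  have hcov : ∀ F : Submodule K V, t ≤ finrank K ↥(X ⊓ F) → X ≤ F := by
    intro F hF
    have : X ⊓ F = X := Submodule.eq_of_le_of_finrank_le inf_le_left (by omega)
    exact inf_eq_left.1 this
  have hXF : ∀ F ∈ ℱ, X ≤ F := fun F hF => hcov F (hX.2 F hF)
  have hXG : IsTCover f t 𝒢 X := by
    by_cases htm' : t = m
    · obtain ⟨F, hF⟩ := hne
      have : X = F := Submodule.eq_of_le_of_finrank_eq (hXF F hF) (by rw [hXd, (hℱ hF).2, htm'])
      rw [this]
      exact ⟨(hℱ hF).1, fun G hG => hcross F hF G hG⟩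
    · by_contra hnot
      have hp5 := Nprime_pos q (t + 1) m ν hq hmν
      have hst := step_cover q hq hK f m n t htn ℱ 𝒢 hℱ h𝒢 hcross X hnot
        (Nprime q (t + 1) m ν) hp5.le
        (fun v hv => by
          have hfr : finrank K ↥(X ⊔ Submodule.span K {v}) = t + 1 := by
            rw [Submodule.finrank_sup_span_singleton hv, hXd]
          have := famAbove_count q ν hq hK f halt hnd hV m hmν ℱ hℱ (X ⊔ Submodule.span K {v})
            (by omega)
          rwa [hfr] at this)
      have : famAbove ℱ X = ℱ := by
        ext F; exact ⟨fun h => h.1, fun h => ⟨h, hXF F h⟩⟩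
      rw [this, hFc] at hst
      have hk := Nprime_key q t m n ν hq (by omega) (by omega) hmν
      have hle : (q : ℚ) ^ (n - t) ≤ (q : ℚ) ^ n := pow_le_pow_right₀ hq'.le (by omega)
      have hpos : 0 < (q : ℚ) ^ (n - t) := by positivity
      nlinarith
  have hXG' : ∀ G ∈ 𝒢, X ≤ G := fun G hG => hcov G (hXG.2 G hG)
  refine ⟨hFc, X, ⟨hX.1, hXd⟩, ?_, ?_⟩
  · have hsub : ℱ ⊆ famAbove (polar f m) X := fun F hF => ⟨hℱ hF, hXF F hF⟩
    refine Set.eq_of_subset_of_ncard_le hsub ?_ (Set.toFinite _)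
    have := famAbove_count q ν hq hK f halt hnd hV m hmν (polar f m) le_rfl X (by omega)
    rw [hXd, ← hFc] at this
    exact_mod_cast this
  · have hsub : 𝒢 ⊆ famAbove (polar f n) X := fun F hF => ⟨h𝒢 hF, hXG' F hF⟩
    refine Set.eq_of_subset_of_ncard_le hsub ?_ (Set.toFinite _)
    have := famAbove_count q ν hq hK f halt hnd hV n hnν (polar f n) le_rfl X (by omega)
    rw [hXd, ← hGc] at this
    exact_mod_cast this

lemma famAbove_inj [Fintype K] [Finite V] (q ν : ℕ) (hq : 2 ≤ q) (hK : Fintype.card K = q)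
    (f : V →ₗ[K] V →ₗ[K] K) (halt : ∀ x, f x x = 0) (hnd : ∀ x, (∀ y, f x y = 0) → x = 0)
    (hV : finrank K V = 2 * ν) (m t : ℕ) (htm : t ≤ m) (hd : m + m + 1 ≤ 2 * ν)
    (ℱ : Set (Submodule K V)) (hne : ℱ.Nonempty) (hc : (ℱ.ncard : ℚ) = Nprime q t m ν)
    (T T' : Submodule K V) (hT : finrank K T = t) (hT' : finrank K T' = t)
    (h : ℱ = famAbove (polar f m) T) (h' : ℱ = famAbove (polar f m) T') : T = T' := by
  by_cases htm' : t = m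
  · obtain ⟨F, hF⟩ := hne
    have h1 : F ∈ famAbove (polar f m) T := h ▸ hF
    have h2 : F ∈ famAbove (polar f m) T' := h' ▸ hF
    have e1 := Submodule.eq_of_le_of_finrank_eq h1.2 (by rw [hT, h1.1.2, htm'])
    have e2 := Submodule.eq_of_le_of_finrank_eq h2.2 (by rw [hT', h1.1.2, htm'])
    rw [e1, e2]
  by_contra hTT
  have : ¬ T' ≤ T := fun hle => hTT (Submodule.eq_of_le_of_finrank_eq hle (by omega)).symm
  obtain ⟨v, hv', hv⟩ := Set.not_subset.1 this
  have hfr : finrank K ↥(T ⊔ Submodule.span K {v}) = t + 1 := by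
    rw [Submodule.finrank_sup_span_singleton hv, hT]
  have hcnt := famAbove_count q ν hq hK f halt hnd hV m (by omega) (polar f m) le_rfl
    (T ⊔ Submodule.span K {v}) (by omega)
  rw [hfr] at hcnt
  have hsub : ℱ ⊆ famAbove (polar f m) (T ⊔ Submodule.span K {v}) := by
    intro F hF
    have h1 : F ∈ famAbove (polar f m) T := h ▸ hF
    have h2 : F ∈ famAbove (polar f m) T' := h' ▸ hF
    exact ⟨h1.1, sup_le h1.2 (by simpa using h2.2 hv')⟩
  have hle : (ℱ.ncard : ℚ) ≤ (famAbove (polar f m) (T ⊔ Submodule.span K {v})).ncard := by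
    exact_mod_cast Set.ncard_le_ncard hsub (Set.toFinite _)
  have hk := Nprime_key q t m 0 ν hq (by omega) (by omega) (by omega)
  have hp := Nprime_pos q (t + 1) m ν hq (by omega)
  simp only [pow_zero, mul_one] at hk
  linarith

lemma prod_pairs (d : ℕ) (hd : 2 ≤ d) (x N : Fin d → ℚ) (hx : ∀ i, 0 < x i) (hN : ∀ i, 0 < N i)
    (h : ∀ i j, i ≠ j → x i * x j ≤ N i * N j) :
    ∏ i, x i ≤ ∏ i, N i ∧ (∏ i, x i = ∏ i, N i → ∀ i j, i ≠ j → x i * x j = N i * N j) := by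
  classical
  have : NeZero d := ⟨by omega⟩
  have hNp : 0 < ∏ i, N i := Finset.prod_pos fun i _ => hN i
  have hxp : 0 < ∏ i, x i := Finset.prod_pos fun i _ => hx i
  have key : ∀ i j, i ≠ j → ((∏ i, x i) / ∏ i, N i) ^ 2 ≤ (x i * x j) / (N i * N j) := by
    intro i j hij
    have e : ∀ y : Fin d → ℚ, (∏ i, y i) ^ 2 = ∏ l, (y l * y (l + (j - i))) := by
      intro y
      rw [Finset.prod_mul_distrib, sq]
      congr 1
      exact (Equiv.prod_comp (Equiv.addRight (j - i)) y).symm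
    rw [div_pow, e x, e N, ← Finset.prod_div_distrib, ← Finset.mul_prod_erase _ _ (Finset.mem_univ i)]
    rw [add_sub_cancel]
    apply mul_le_of_le_one_right
    · have := hx i; have := hx j; have := hN i; have := hN j
      positivity
    · apply Finset.prod_le_one
      · intro l _
        have := hx l; have := hx (l + (j - i)); have := hN l; have := hN (l + (j - i))
        positivity
      · intro l _
        rw [div_le_one (mul_pos (hN _) (hN _))]
        apply h
        intro hl
        have : j - i = 0 := by simpa using hl
        exact hij (sub_eq_zero.1 this).symm
  constructor
  · have h01 : (⟨0, by omega⟩ : Fin d) ≠ ⟨1, by omega⟩ := by simp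
    have := key _ _ h01
    have h2 : ((∏ i, x i) / ∏ i, N i) ^ 2 ≤ 1 :=
      this.trans ((div_le_one (mul_pos (hN _) (hN _))).2 (h _ _ h01))
    have h3 := (sq_le_one_iff₀ (by positivity)).1 h2
    exact (div_le_one hNp).1 h3
  · intro heq i j hij
    have := key i j hij
    rw [heq, div_self hNp.ne', one_pow, one_le_div (mul_pos (hN _) (hN _))] at this
    exact le_antisymm (h i j hij) this

theorem stmt_2
    (q ν t d : ℕ) (hq : IsPrimePow q) (hd : 2 ≤ d)
    {K : Type} [Field K] [Fintype K] (hK : Fintype.card K = q)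
    (f : (Fin (2 * ν) → K) →ₗ[K] (Fin (2 * ν) → K) →ₗ[K] K)
    (halt : ∀ x, f x x = 0)
    (hnd : ∀ x, (∀ y, f x y = 0) → x = 0)
    (hν : 0 < ν) (ht : 0 < t)
    (m : Fin d → ℕ) (hmpos : ∀ i, 0 < m i)
    (hmono : ∀ i j : Fin d, i ≤ j → m j ≤ m i)
    (hmt : ∀ i, t ≤ m i)
    (hdim : 2 * m ⟨0, by omega⟩ + m ⟨1, by omega⟩ + 1 ≤ 2 * ν)
    (ℱ : Fin d → Set (Submodule K (Fin (2 * ν) → K)))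
    (hsub : ∀ i, ℱ i ⊆ polar f (m i))
    (hcross : ∀ F : Fin d → Submodule K (Fin (2 * ν) → K),
      (∀ i, F i ∈ ℱ i) → t ≤ finrank K ↥(⨅ i, F i)) :
    (∏ i, ((ℱ i).ncard : ℚ)) ≤ (∏ i, Nprime q t (m i) ν) ∧
      ((∏ i, ((ℱ i).ncard : ℚ)) = (∏ i, Nprime q t (m i) ν) →
        ∃ T ∈ polar f t, ∀ i, ℱ i = {F | F ∈ polar f (m i) ∧ T ≤ F}) := by
  classical
  subst hK
  have hq : 2 ≤ Fintype.card K := Fintype.one_lt_card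
  have hV : finrank K (Fin (2 * ν) → K) = 2 * ν := by simp
  set z : Fin d := ⟨0, by omega⟩ with hz
  set o : Fin d := ⟨1, by omega⟩ with ho
  have hm0 : ∀ i, m i ≤ m z := fun i => hmono _ _ (Fin.mk_le_of_le_val (Nat.zero_le _))
  have hm1 : ∀ i, i ≠ z → m i ≤ m o := fun i hi => hmono _ _ (by
    apply Fin.mk_le_of_le_val
    have : i.1 ≠ 0 := fun h => hi (Fin.ext h)
    omega)
  have hmν : ∀ i, m i ≤ ν := fun i => by have := hm0 i; omega
  have hNpos : ∀ i, 0 < Nprime (Fintype.card K) t (m i) ν := fun i => Nprime_pos _ _ _ _ hq (hmν i)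
  by_cases hne : ∀ i, (ℱ i).Nonempty
  swap
  · push Not at hne
    obtain ⟨i, hi⟩ := hne
    have h0 : ∏ i, ((ℱ i).ncard : ℚ) = 0 := Finset.prod_eq_zero (Finset.mem_univ i) (by simp [hi])
    have hp : 0 < ∏ i, Nprime (Fintype.card K) t (m i) ν := Finset.prod_pos fun i _ => hNpos i
    rw [h0]
    exact ⟨hp.le, fun h => absurd h hp.ne⟩
  have hcr : ∀ i j, i ≠ j → ∀ F ∈ ℱ i, ∀ G ∈ ℱ j, t ≤ finrank K ↥(F ⊓ G) := by
    intro i j hij F hF G hG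
    choose H hH using hne
    have := hcross (fun k => if k = i then F else if k = j then G else H k) (by
      intro k
      by_cases h1 : k = i
      · subst h1; simpa using hF
      · by_cases h2 : k = j
        · subst h2; simpa [h1] using hG
        · simpa [h1, h2] using hH k)
    refine this.trans (Submodule.finrank_mono (le_inf ?_ ?_))
    · exact (iInf_le _ i).trans (by simp)
    · exact (iInf_le _ j).trans (by simp [hij.symm])
  have hdd : ∀ i j, i ≠ j → m j + m i + m i + 1 ≤ 2 * ν := by
    intro i j hij
    have a1 := hm0 i
    have a2 := hm0 j
    by_cases hi : i = z
    · have := hm1 j (fun h => hij (hi.trans h.symm))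
      omega
    · have := hm1 i hi
      omega
  have hpair := fun i j (hij : i ≠ j) => pair_thm (Fintype.card K) ν hq rfl f halt hnd hV (m i) (m j) t
    (hmt i) (hmt j) (hdd i j hij) (hdd j i hij.symm) (ℱ i) (ℱ j) (hsub i) (hsub j) (hne i) (hne j)
    (hcr i j hij)
  have hpp := prod_pairs d hd (fun i => ((ℱ i).ncard : ℚ)) (fun i => Nprime (Fintype.card K) t (m i) ν)
    (fun i => by have := (Set.ncard_pos (Set.toFinite (ℱ i))).2 (hne i); exact_mod_cast this) hNpos
    (fun i j hij => (hpair i j hij).1)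
  refine ⟨hpp.1, fun heq => ?_⟩
  have heq' := fun i j (hij : i ≠ j) => (hpair i j hij).2 (hpp.2 heq i j hij)
  have hzo : z ≠ o := by simp [hz, ho]
  obtain ⟨hc, T, hT, hTz, hTo⟩ := heq' z o hzo
  refine ⟨T, hT, fun i => ?_⟩
  by_cases hi : i = z
  · rw [hi]; exact hTz
  · obtain ⟨_, T', hT', hTz', hTi⟩ := heq' z i (fun h => hi h.symm)
    have := famAbove_inj (Fintype.card K) ν hq rfl f halt hnd hV (m z) t (hmt z) (by omega) (ℱ z) (hne z)
      hc T T' hT.2 hT'.2 hTz hTz'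
    rw [hTi, this]
    rfl

end
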